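/- arXiv:2501.00780 — 2 statements merged into one kernel-verified Lean document; each statement's English description precedes it below -/
import Mathlib

section
/- Let T > 0 and let f : [0,T] → [0, ∞) be a Borel measurable, locally bounded, non-negative and non-decreasing function, and let φ : [0,T] → [0, ∞) be a non-negative non-decreasing function. Suppose there exist positive real constants A and B such that for every t ∈ [0,T], f(t) ≤ A∫₀^t f(s) ds + B(∫₀^t f(s)² ds)^{1/2} + φ(t). Then for every t ∈ [0,T], f(t) ≤ 2 e^{(2A + B²) t} φ(t). -/
open MeasureTheory Set intervalIntegral

/-!
Let `M` be the supremum of `f` on `[a, t]`; it is finite because square integrability of `f` makes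
the right-hand side of the hypothesis bounded. On `[a, t]` we have `∫ f² ≤ M ∫ f`, so by Young's
inequality `B √(∫ f²) ≤ M / 2 + (B² / 2) ∫ f`, and taking suprema in the hypothesis absorbs `M / 2`
into the left-hand side. This leaves the linear inequality `f t ≤ (2A + B²) ∫ f + 2 φ t`, to which
Gronwall's lemma in integral form applies.
-/

section LinearGronwall

variable {f φ : ℝ → ℝ} {a b c K : ℝ}

theorem le_mul_exp_of_le_integral_of_continuousOn (hK : 0 ≤ K) (hf : ContinuousOn f (Icc a b))
    (h : ∀ t ∈ Icc a b, f t ≤ K * (∫ s in a..t, f s) + c) :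
    ∀ t ∈ Icc a b, f t ≤ c * Real.exp (K * (t - a)) := by
  intro t ht
  set V : ℝ → ℝ := fun x => K * (∫ s in a..x, f s) + c with hV
  have hV_deriv : ∀ x ∈ Icc a b, HasDerivWithinAt V (K * f x) (Icc a b) x := by
    intro x hx
    have : Fact (x ∈ Icc a b) := ⟨hx⟩
    have h_int : IntervalIntegrable f volume a x :=
      (hf.mono (Icc_subset_Icc_right hx.2)).intervalIntegrable_of_Icc hx.1
    have h_meas := hf.stronglyMeasurableAtFilter_nhdsWithin (μ := volume) measurableSet_Icc x
    exact ((integral_hasDerivWithinAt_right h_int h_meas (hf x hx)).const_mul K).add_const c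
  have hV_slope : ∀ x ∈ Ico a b, ∀ r, K * f x < r →
      ∃ᶠ z in nhdsWithin x (Ioi x), (z - x)⁻¹ * (V z - V x) < r := fun x hx _ hr =>
    ((hV_deriv x (Ico_subset_Icc_self hx)).mono_of_mem_nhdsWithin
      (Icc_mem_nhdsGE_of_mem hx)).liminf_right_slope_le hr
  have hV_bound := le_gronwallBound_of_liminf_deriv_right_le (δ := c) (K := K) (ε := 0)
    (fun x hx => (hV_deriv x hx).continuousWithinAt) hV_slope (by simp [hV])
    (fun x hx => by
      simpa using mul_le_mul_of_nonneg_left (h x (Ico_subset_Icc_self hx)) hK) t ht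
  rw [gronwallBound_ε0] at hV_bound
  exact (h t ht).trans hV_bound

theorem le_mul_exp_of_le_integral (hK : 0 ≤ K) (hf : IntegrableOn f (Icc a b))
    (h : ∀ t ∈ Icc a b, f t ≤ K * (∫ s in a..t, f s) + c) :
    ∀ t ∈ Icc a b, f t ≤ c * Real.exp (K * (t - a)) := by
  intro t ht
  -- The right-hand side `G` is continuous and, dominating `f`, satisfies the same inequality.
  set G : ℝ → ℝ := fun x => K * (∫ s in a..x, f s) + c
  have hG : ContinuousOn G (Icc a b) := by
    rw [← uIcc_of_le (ht.1.trans ht.2)] at hf ⊢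
    exact ((continuousOn_primitive_interval hf).const_mul K).add continuousOn_const
  refine (h t ht).trans (le_mul_exp_of_le_integral_of_continuousOn hK hG (fun x hx => ?_) t ht)
  have hsub : Icc a x ⊆ Icc a b := Icc_subset_Icc_right hx.2
  have hfG : ∫ s in a..x, f s ≤ ∫ s in a..x, G s :=
    intervalIntegral.integral_mono_on hx.1
      ((intervalIntegrable_iff_integrableOn_Icc_of_le hx.1).2 (hf.mono_set hsub))
      ((hG.mono hsub).intervalIntegrable_of_Icc hx.1) fun s hs => h s (hsub hs)
  exact add_le_add_left (mul_le_mul_of_nonneg_left hfG hK) c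

theorem le_mul_exp_of_le_integral_of_monotoneOn (hK : 0 ≤ K) (hf : IntegrableOn f (Icc a b))
    (hφ : MonotoneOn φ (Icc a b))
    (h : ∀ t ∈ Icc a b, f t ≤ K * (∫ s in a..t, f s) + φ t) :
    ∀ t ∈ Icc a b, f t ≤ φ t * Real.exp (K * (t - a)) := by
  intro t ht
  have hsub : Icc a t ⊆ Icc a b := Icc_subset_Icc_right ht.2
  refine le_mul_exp_of_le_integral hK (hf.mono_set hsub) (fun s hs => ?_) t ⟨ht.1, le_rfl⟩
  exact (h s (hsub hs)).trans (by gcongr; exact hφ (hsub hs) ht hs.2)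

end LinearGronwall

section SqrtTerm

variable {α : Type*} [MeasurableSpace α] {μ : Measure α} {f : α → ℝ} {M : ℝ}

theorem integral_sq_le_mul_integral (hf : Integrable f μ) (hf_nonneg : ∀ᵐ x ∂μ, 0 ≤ f x)
    (hfM : ∀ᵐ x ∂μ, f x ≤ M) : ∫ x, f x ^ 2 ∂μ ≤ M * ∫ x, f x ∂μ := by
  rw [← MeasureTheory.integral_const_mul]
  refine integral_mono_of_nonneg (ae_of_all _ fun x => sq_nonneg (f x)) (hf.const_mul M) ?_
  filter_upwards [hf_nonneg, hfM] with x hx hxM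
  rw [sq]
  exact mul_le_mul_of_nonneg_right hxM hx

theorem mul_sqrt_le_half_add {x y z : ℝ} (hx : 0 ≤ x) (hy : 0 ≤ y) (hz : z ≤ x * y) (B : ℝ) :
    B * √z ≤ x / 2 + B ^ 2 / 2 * y :=
  calc B * √z ≤ |B| * √(x * y) := by gcongr; exact le_abs_self B
    _ = √x * (|B| * √y) := by rw [Real.sqrt_mul hx]; ring
    _ ≤ (√x ^ 2 + (|B| * √y) ^ 2) / 2 := by linarith [two_mul_le_add_sq √x (|B| * √y)]
    _ = x / 2 + B ^ 2 / 2 * y := by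
      rw [mul_pow, sq_abs, Real.sq_sqrt hx, Real.sq_sqrt hy]; ring

theorem mul_sqrt_integral_sq_le (hf : Integrable f μ) (hf_nonneg : ∀ᵐ x ∂μ, 0 ≤ f x)
    (hfM : ∀ᵐ x ∂μ, f x ≤ M) (hM : 0 ≤ M) (B : ℝ) :
    B * √(∫ x, f x ^ 2 ∂μ) ≤ M / 2 + B ^ 2 / 2 * ∫ x, f x ∂μ :=
  mul_sqrt_le_half_add hM (integral_nonneg_of_ae hf_nonneg)
    (integral_sq_le_mul_integral hf hf_nonneg hfM) B

end SqrtTerm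

section Gronwall

variable {f φ : ℝ → ℝ} {a b A B : ℝ}

theorem bddAbove_image_of_le_integral_add_sqrt (hA : 0 ≤ A)
    (hf : MemLp f 2 (volume.restrict (Icc a b))) (hf_nonneg : ∀ t ∈ Icc a b, 0 ≤ f t)
    (hφ : MonotoneOn φ (Icc a b))
    (h : ∀ t ∈ Icc a b,
      f t ≤ A * (∫ s in a..t, f s) + B * √(∫ s in a..t, f s ^ 2) + φ t) :
    BddAbove (f '' Icc a b) := by
  refine ⟨A * (∫ s in a..b, f s) + |B| * √(∫ s in a..b, f s ^ 2) + φ b, ?_⟩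
  rintro _ ⟨t, ht, rfl⟩
  have hab : a ≤ b := ht.1.trans ht.2
  have h_int : ∫ s in a..t, f s ≤ ∫ s in a..b, f s :=
    intervalIntegral.integral_mono_interval le_rfl ht.1 ht.2
      (ae_restrict_of_forall_mem measurableSet_Ioc fun s hs => hf_nonneg s (Ioc_subset_Icc_self hs))
      ((intervalIntegrable_iff_integrableOn_Icc_of_le hab).2 (hf.integrable one_le_two))
  have h_int_sq : ∫ s in a..t, f s ^ 2 ≤ ∫ s in a..b, f s ^ 2 :=
    intervalIntegral.integral_mono_interval le_rfl ht.1 ht.2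
      (ae_of_all _ fun s => sq_nonneg (f s))
      ((intervalIntegrable_iff_integrableOn_Icc_of_le hab).2 hf.integrable_sq)
  calc f t ≤ A * (∫ s in a..t, f s) + B * √(∫ s in a..t, f s ^ 2) + φ t := h t ht
    _ ≤ A * (∫ s in a..b, f s) + |B| * √(∫ s in a..b, f s ^ 2) + φ b := by
      gcongr
      · exact le_abs_self B
      · exact hφ ht (right_mem_Icc.2 hab) ht.2

theorem le_integral_add_two_mul_of_le_integral_add_sqrt (hA : 0 ≤ A)
    (hf : IntegrableOn f (Icc a b)) (hf_nonneg : ∀ t ∈ Icc a b, 0 ≤ f t)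
    (hf_bdd : BddAbove (f '' Icc a b)) (hφ : MonotoneOn φ (Icc a b))
    (h : ∀ t ∈ Icc a b,
      f t ≤ A * (∫ s in a..t, f s) + B * √(∫ s in a..t, f s ^ 2) + φ t) :
    ∀ t ∈ Icc a b, f t ≤ (2 * A + B ^ 2) * (∫ s in a..t, f s) + 2 * φ t := by
  intro t ht
  have hsub : Icc a t ⊆ Icc a b := Icc_subset_Icc_right ht.2
  have h_integrable : IntervalIntegrable f volume a t :=
    (intervalIntegrable_iff_integrableOn_Icc_of_le ht.1).2 (hf.mono_set hsub)
  have h_nonneg_ae : ∀ᵐ u ∂volume.restrict (Ioc a t), 0 ≤ f u :=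
    ae_restrict_of_forall_mem measurableSet_Ioc fun u hu =>
      hf_nonneg u (hsub (Ioc_subset_Icc_self hu))
  set M := sSup (f '' Icc a t)
  have hM : ∀ s ∈ Icc a t, f s ≤ M := fun s hs =>
    le_csSup (hf_bdd.mono (image_mono hsub)) (mem_image_of_mem f hs)
  have hM_nonneg : 0 ≤ M := (hf_nonneg t ht).trans (hM t (right_mem_Icc.2 ht.1))
  have h_sqrt : ∀ s ∈ Icc a t,
      B * √(∫ u in a..s, f u ^ 2) ≤ M / 2 + B ^ 2 / 2 * ∫ u in a..s, f u := by
    intro s hs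
    have hsub' : Ioc a s ⊆ Ioc a t := Ioc_subset_Ioc_right hs.2
    simp only [intervalIntegral.integral_of_le hs.1]
    exact mul_sqrt_integral_sq_le (h_integrable.1.mono_set hsub')
      (ae_restrict_of_ae_restrict_of_subset hsub' h_nonneg_ae)
      (ae_restrict_of_forall_mem measurableSet_Ioc fun u hu =>
        hM u (Ioc_subset_Icc_self (hsub' hu))) hM_nonneg B
  have h_half : ∀ s ∈ Icc a t, f s ≤ M / 2 + ((A + B ^ 2 / 2) * (∫ u in a..t, f u) + φ t) := by
    intro s hs
    calc f s ≤ A * (∫ u in a..s, f u) + B * √(∫ u in a..s, f u ^ 2) + φ s := h s (hsub hs)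
      _ ≤ M / 2 + ((A + B ^ 2 / 2) * (∫ u in a..s, f u) + φ s) := by linarith [h_sqrt s hs]
      _ ≤ M / 2 + ((A + B ^ 2 / 2) * (∫ u in a..t, f u) + φ t) := by
        gcongr
        · exact intervalIntegral.integral_mono_interval le_rfl hs.1 hs.2 h_nonneg_ae h_integrable
        · exact hφ (hsub hs) ht hs.2
  have hM_le : M ≤ M / 2 + ((A + B ^ 2 / 2) * (∫ u in a..t, f u) + φ t) :=
    csSup_le ((nonempty_Icc.2 ht.1).image f) (forall_mem_image.2 h_half)
  linarith [hM t (right_mem_Icc.2 ht.1)]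

theorem a_la_gronwall_general (hA : 0 ≤ A)
    (hf : MemLp f 2 (volume.restrict (Icc a b))) (hf_nonneg : ∀ t ∈ Icc a b, 0 ≤ f t)
    (hφ : MonotoneOn φ (Icc a b))
    (h : ∀ t ∈ Icc a b,
      f t ≤ A * (∫ s in a..t, f s) + B * √(∫ s in a..t, f s ^ 2) + φ t) :
    ∀ t ∈ Icc a b, f t ≤ 2 * Real.exp ((2 * A + B ^ 2) * (t - a)) * φ t := by
  have hf_int : IntegrableOn f (Icc a b) := hf.integrable one_le_two
  have hf_bdd : BddAbove (f '' Icc a b) :=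
    bddAbove_image_of_le_integral_add_sqrt hA hf hf_nonneg hφ h
  have h_linear : ∀ t ∈ Icc a b, f t ≤ (2 * A + B ^ 2) * (∫ s in a..t, f s) + 2 * φ t :=
    le_integral_add_two_mul_of_le_integral_add_sqrt hA hf_int hf_nonneg hf_bdd hφ h
  have hφ_two : MonotoneOn (fun t => 2 * φ t) (Icc a b) :=
    fun s hs t ht hst => mul_le_mul_of_nonneg_left (hφ hs ht hst) zero_le_two
  intro t ht
  rw [mul_right_comm]
  exact le_mul_exp_of_le_integral_of_monotoneOn (by positivity) hf_int hφ_two h_linear t ht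

end Gronwall

/-- **"À la Gronwall" inequality** (Lemma 3.3).
Let `f : [0,T] → ℝ⁺` be Borel measurable, locally bounded, non-negative and non-decreasing,
and let `φ : [0,T] → ℝ⁺` be non-negative and non-decreasing. If there are positive constants
`A, B` such that `f(t) ≤ A ∫₀^t f(s) ds + B (∫₀^t f(s)² ds)^{1/2} + φ(t)` for all `t ∈ [0,T]`,
then `f(t) ≤ 2 e^{(2A + B²) t} φ(t)` for all `t ∈ [0,T]`. -/
theorem a_la_gronwall
    (T : ℝ) (hT : 0 < T) (f φ : ℝ → ℝ)
    (hf_meas : Measurable f)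
    (hf_bdd : BddAbove (f '' Set.Icc 0 T))
    (hf_nonneg : ∀ t ∈ Set.Icc 0 T, 0 ≤ f t)
    (hf_mono : MonotoneOn f (Set.Icc 0 T))
    (hφ_nonneg : ∀ t ∈ Set.Icc 0 T, 0 ≤ φ t)
    (hφ_mono : MonotoneOn φ (Set.Icc 0 T))
    (A B : ℝ) (hA : 0 < A) (hB : 0 < B)
    (h : ∀ t ∈ Set.Icc 0 T,
      f t ≤ A * (∫ s in (0:ℝ)..t, f s) + B * Real.sqrt (∫ s in (0:ℝ)..t, (f s) ^ 2) + φ t) :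
    ∀ t ∈ Set.Icc 0 T, f t ≤ 2 * Real.exp ((2 * A + B ^ 2) * t) * φ t := by
  simpa only [sub_zero] using a_la_gronwall_general hA.le
    (hf_mono.memLp_isCompact isCompact_Icc) hf_nonneg hφ_mono h
end

section
/- Let T > 0 and let f : [0,T] → [0, ∞) be a Borel measurable, locally bounded, non-negative and non-decreasing function. Suppose there exist positive real constants A, B and a constant K ≥ 0 such that for every t ∈ [0,T], f(t) ≤ A∫₀^t f(s) ds + B(∫₀^t f(s)² ds)^{1/2} + K. Then for every t ∈ [0,T], f(t) ≤ 2 K e^{(2A + B²) t}. -/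
open MeasureTheory Set intervalIntegral

/-!
Since `f` is non-decreasing, `∫₀ᵗ f² ≤ f(t) ∫₀ᵗ f`, so by the AM-GM inequality
`B (∫₀ᵗ f²)^{1/2} ≤ f(t)/2 + (B²/2) ∫₀ᵗ f`. Absorbing `f(t)/2` into the left-hand side leaves
`f(t) ≤ 2K + (2A + B²) ∫₀ᵗ f`, to which the linear Gronwall inequality applies.
-/

section IntegralGronwall

variable {f u : ℝ → ℝ} {a b C δ ε K : ℝ}

theorem hasDerivWithinAt_Ici_integral_of_continuousOn_Icc
    {E : Type*} [NormedAddCommGroup E] [NormedSpace ℝ E] [CompleteSpace E] {g : ℝ → E} {x : ℝ}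
    (hg : ContinuousOn g (Icc a b)) (hx : x ∈ Ico a b) :
    HasDerivWithinAt (fun t ↦ ∫ s in a..t, g s) (g x) (Ici x) x := by
  have nhds_le : nhdsWithin x (Ioi x) ≤ nhdsWithin x (Icc a b) :=
    nhdsWithin_le_of_mem <| Filter.mem_of_superset (Ioo_mem_nhdsGT hx.2)
      fun _ hy ↦ ⟨hx.1.trans hy.1.le, hy.2.le⟩
  have integrable : IntervalIntegrable g volume a x :=
    (hg.mono (Icc_subset_Icc_right hx.2.le)).intervalIntegrable_of_Icc hx.1
  exact integral_hasDerivWithinAt_right integrable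
    ((hg.stronglyMeasurableAtFilter_nhdsWithin measurableSet_Icc x).filter_mono nhds_le)
    ((hg x (Ico_subset_Icc_self hx)).mono_left nhds_le)

theorem le_gronwallBound_of_le_add_integral (hC : 0 ≤ C) (hu : ContinuousOn u (Icc a b))
    (h : ∀ t ∈ Icc a b, u t ≤ δ + ∫ s in a..t, (C * u s + ε)) :
    ∀ t ∈ Icc a b, u t ≤ gronwallBound δ C ε (t - a) := by
  intro t ht
  have hab : a ≤ b := ht.1.trans ht.2
  have integrand_continuous : ContinuousOn (fun s ↦ C * u s + ε) (Icc a b) := by fun_prop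
  have majorant_continuous :
      ContinuousOn (fun t ↦ δ + ∫ s in a..t, (C * u s + ε)) (Icc a b) := by
    rw [← uIcc_of_le hab]
    exact (continuousOn_primitive_interval'
      (integrand_continuous.intervalIntegrable_of_Icc hab) left_mem_uIcc).const_add δ
  have majorant_deriv : ∀ x ∈ Ico a b,
      HasDerivWithinAt (fun t ↦ δ + ∫ s in a..t, (C * u s + ε)) (C * u x + ε) (Ici x) x :=
    fun x hx ↦
      (hasDerivWithinAt_Ici_integral_of_continuousOn_Icc integrand_continuous hx).const_add δ
  refine (h t ht).trans <| le_gronwallBound_of_liminf_deriv_right_le majorant_continuous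
    (fun x hx _ hr ↦ (majorant_deriv x hx).liminf_right_slope_le hr) (by simp) ?_ t ht
  intro x hx
  gcongr
  exact h x (Ico_subset_Icc_self hx)

theorem le_mul_exp_of_le_add_mul_integral (hC : 0 ≤ C) (hf : IntervalIntegrable f volume a b)
    (h : ∀ t ∈ Icc a b, f t ≤ K + C * ∫ s in a..t, f s) :
    ∀ t ∈ Icc a b, f t ≤ K * Real.exp (C * (t - a)) := by
  intro t ht
  have hab : a ≤ b := ht.1.trans ht.2
  -- Unlike `f`, the majorant `K + C * ∫ f` is continuous, and it inherits the integral inequality.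
  have majorant_continuous : ContinuousOn (fun t ↦ K + C * ∫ s in a..t, f s) (Icc a b) := by
    rw [← uIcc_of_le hab]
    exact ((continuousOn_primitive_interval' hf left_mem_uIcc).const_mul C).const_add K
  have majorant_le : ∀ t ∈ Icc a b, K + C * ∫ s in a..t, f s ≤
      K + ∫ s in a..t, (C * (K + C * ∫ r in a..s, f r) + 0) := by
    intro t ht
    have subset : Icc a t ⊆ Icc a b := Icc_subset_Icc_right ht.2
    simp only [add_zero, intervalIntegral.integral_const_mul]
    gcongr K + C * ?_
    refine integral_mono_on ht.1 (hf.mono_set ?_)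
      ((majorant_continuous.mono subset).intervalIntegrable_of_Icc ht.1)
      fun s hs ↦ h s (subset hs)
    rwa [uIcc_of_le ht.1, uIcc_of_le hab]
  rw [← gronwallBound_ε0]
  exact (h t ht).trans
    (le_gronwallBound_of_le_add_integral hC majorant_continuous majorant_le t ht)

end IntegralGronwall

theorem two_mul_mul_sqrt_mul_le {x y : ℝ} (hx : 0 ≤ x) (hy : 0 ≤ y) (c : ℝ) :
    2 * (c * √(x * y)) ≤ x + c ^ 2 * y := by
  calc 2 * (c * √(x * y)) = 2 * √x * (c * √y) := by rw [Real.sqrt_mul hx]; ring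
    _ ≤ √x ^ 2 + (c * √y) ^ 2 := two_mul_le_add_sq _ _
    _ = x + c ^ 2 * y := by rw [mul_pow, Real.sq_sqrt hx, Real.sq_sqrt hy]

section MonotoneIntegral

variable {f : ℝ → ℝ} {a b : ℝ} {μ : Measure ℝ} [IsLocallyFiniteMeasure μ]

theorem intervalIntegrable_of_monotoneOn_Icc (hab : a ≤ b) (hf : MonotoneOn f (Icc a b)) :
    IntervalIntegrable f μ a b := by
  rw [← uIcc_of_le hab] at hf
  exact hf.intervalIntegrable

theorem integral_sq_le_mul_integral_of_monotoneOn (hab : a ≤ b) (hf : MonotoneOn f (Icc a b))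
    (hf_nonneg : ∀ x ∈ Icc a b, 0 ≤ f x) :
    ∫ x in a..b, f x ^ 2 ∂μ ≤ f b * ∫ x in a..b, f x ∂μ := by
  have sq_mono : MonotoneOn (fun x ↦ f x ^ 2) (Icc a b) :=
    fun x hx y hy hxy ↦ pow_le_pow_left₀ (hf_nonneg x hx) (hf hx hy hxy) 2
  have sq_le : ∀ x ∈ Icc a b, f x ^ 2 ≤ f b * f x := by
    intro x hx
    rw [sq]
    exact mul_le_mul_of_nonneg_right (hf hx (right_mem_Icc.2 hab) hx.2) (hf_nonneg x hx)
  calc ∫ x in a..b, f x ^ 2 ∂μ ≤ ∫ x in a..b, f b * f x ∂μ :=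
        integral_mono_on hab (intervalIntegrable_of_monotoneOn_Icc hab sq_mono)
          ((intervalIntegrable_of_monotoneOn_Icc hab hf).const_mul _) sq_le
    _ = f b * ∫ x in a..b, f x ∂μ := intervalIntegral.integral_const_mul _ _

theorem le_two_mul_add_mul_integral_of_monotoneOn {A B K : ℝ} (hab : a ≤ b)
    (hf : MonotoneOn f (Icc a b)) (hf_nonneg : ∀ x ∈ Icc a b, 0 ≤ f x) (hB : 0 ≤ B)
    (h : f b ≤ A * (∫ x in a..b, f x ∂μ) + B * √(∫ x in a..b, f x ^ 2 ∂μ) + K) :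
    f b ≤ 2 * K + (2 * A + B ^ 2) * ∫ x in a..b, f x ∂μ := by
  have sqrt_le : B * √(∫ x in a..b, f x ^ 2 ∂μ) ≤ B * √(f b * ∫ x in a..b, f x ∂μ) := by
    gcongr
    exact integral_sq_le_mul_integral_of_monotoneOn hab hf hf_nonneg
  have am_gm : 2 * (B * √(f b * ∫ x in a..b, f x ∂μ)) ≤ f b + B ^ 2 * ∫ x in a..b, f x ∂μ :=
    two_mul_mul_sqrt_mul_le (hf_nonneg b (right_mem_Icc.2 hab))
      (intervalIntegral.integral_nonneg hab hf_nonneg) B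
  linarith

end MonotoneIntegral

/-- **"À la Gronwall" inequality with constant perturbation** (special case of Lemma 3.3).
Let `f : [0,T] → ℝ⁺` be Borel measurable, locally bounded, non-negative and non-decreasing.
If there are positive constants `A, B` and a constant `K ≥ 0` such that
`f(t) ≤ A ∫₀^t f(s) ds + B (∫₀^t f(s)² ds)^{1/2} + K` for all `t ∈ [0,T]`,
then `f(t) ≤ 2 K e^{(2A + B²) t}` for all `t ∈ [0,T]`. -/
theorem a_la_gronwall_const
    (T : ℝ) (hT : 0 < T) (f : ℝ → ℝ)
    (hf_meas : Measurable f)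
    (hf_bdd : BddAbove (f '' Set.Icc 0 T))
    (hf_nonneg : ∀ t ∈ Set.Icc 0 T, 0 ≤ f t)
    (hf_mono : MonotoneOn f (Set.Icc 0 T))
    (A B K : ℝ) (hA : 0 < A) (hB : 0 < B) (hK : 0 ≤ K)
    (h : ∀ t ∈ Set.Icc 0 T,
      f t ≤ A * (∫ s in (0:ℝ)..t, f s) + B * Real.sqrt (∫ s in (0:ℝ)..t, (f s) ^ 2) + K) :
    ∀ t ∈ Set.Icc 0 T, f t ≤ 2 * K * Real.exp ((2 * A + B ^ 2) * t) := by
  have integrable : IntervalIntegrable f volume 0 T :=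
    intervalIntegrable_of_monotoneOn_Icc hT.le hf_mono
  have linear_bound : ∀ t ∈ Icc 0 T, f t ≤ 2 * K + (2 * A + B ^ 2) * ∫ s in (0:ℝ)..t, f s := by
    intro t ht
    have subset : Icc 0 t ⊆ Icc 0 T := Icc_subset_Icc_right ht.2
    exact le_two_mul_add_mul_integral_of_monotoneOn ht.1 (hf_mono.mono subset)
      (fun s hs ↦ hf_nonneg s (subset hs)) hB.le (h t ht)
  intro t ht
  simpa only [sub_zero] using
    le_mul_exp_of_le_add_mul_integral (by positivity) integrable linear_bound t ht
end
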